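/- arXiv:0806.0176 — 3 statements merged into one kernel-verified Lean document; each statement's English description precedes it below -/
import Mathlib

section
/- The ring C is an ascending union of Dedekind domains: for each finite subset I ⊆ ℤ∖{0}, the subring R_I generated by x_0 and {x_n : n ∈ I} is a Dedekind domain, R_I ⊆ R_J when I ⊆ J, and C is the union of the R_I; moreover C is flat over each R_I. -/
open scoped symmDiff

noncomputable section

/-- The ring `C = k[x_n : n ∈ ℤ] / (x_n² + n = x_m² + m)`. -/
abbrev WeylC (k : Type) [Field k] : Type :=
  MvPolynomial ℤ k ⧸ Ideal.span { p : MvPolynomial ℤ k |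
    ∃ m n : ℤ, p = MvPolynomial.X n ^ 2 + (n : MvPolynomial ℤ k)
      - MvPolynomial.X m ^ 2 - (m : MvPolynomial ℤ k) }

variable (k : Type) [Field k]

/-- The generator `x_n` of `C`. -/
def xC (n : ℤ) : WeylC k := Ideal.Quotient.mk _ (MvPolynomial.X n)

/-- `x_I := ∏_{i ∈ I} x_i` for a finite subset `I ⊆ ℤ` (with `x_∅ = 1`). -/
def xS (I : Finset ℤ) : WeylC k := ∏ i ∈ I, xC k i

/-- The identity component `C_∅ = k[x_0²]`. -/
def Cphi : Subalgebra k (WeylC k) := Algebra.adjoin k {xC k 0 ^ 2}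

/-- The homogeneous component `C_I = C_∅ · x_I` of the `ℤ_fin`-grading on `C`. -/
def Cgrade (I : Finset ℤ) : Submodule k (WeylC k) :=
  (Cphi k).toSubmodule.map (LinearMap.mulRight k (xS k I))

/-- The subring `R_I` of `C` generated (as a `k`-algebra) by `x_0` and the `x_n`
with `n ∈ I`, for a finite subset `I ⊆ ℤ ∖ {0}`. -/
def RI (I : Finset ℤ) : Subalgebra k (WeylC k) :=
  Algebra.adjoin k ({xC k 0} ∪ xC k '' (I : Set ℤ))

namespace WeylAux

open Polynomial

/-- `X² - n`. -/
def dp (F : Type) [Field F] (n : ℤ) : F[X] := X ^ 2 - C (n : F)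

theorem dp_sqfree {F : Type} [Field F] [CharZero F] (J : Finset ℤ) (hJ : (0 : ℤ) ∉ J) :
    Squarefree (∏ n ∈ J, dp F n) := by
  apply Separable.squarefree
  apply separable_prod'
  · intro a _ b _ hab
    have h : ((b : F) - a) ≠ 0 := by
      rw [sub_ne_zero]; exact_mod_cast hab.symm
    refine ⟨C ((b : F) - a)⁻¹, - C ((b : F) - a)⁻¹, ?_⟩
    have : C ((b : F) - a)⁻¹ * dp F a + -C ((b : F) - a)⁻¹ * dp F b
        = C (((b : F) - a)⁻¹ * ((b : F) - a)) := by
      simp only [dp, C_mul, C_sub]; ring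
    rw [this, inv_mul_cancel₀ h, C_1]
  · intro n hn
    refine separable_X_pow_sub_C (n : F) (by norm_num) ?_
    have : n ≠ 0 := fun h => hJ (h ▸ hn)
    exact_mod_cast this

theorem base_case {A Q : Type} [CommRing A] [IsDomain A] [IsPrincipalIdealRing A] [Field Q]
    [Algebra A Q] [IsFractionRing A Q] (d : A) (hd : Squarefree d) (z : Q)
    (hz : IsIntegral A (z ^ 2 * algebraMap A Q d)) : ∃ a, algebraMap A Q a = z := by
  obtain ⟨p, hp⟩ := (IsIntegrallyClosed.isIntegral_iff (R := A)).1 hz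
  obtain ⟨u, v, huv, e⟩ := IsFractionRing.exists_reduced_fraction (A := A) z
  have hv0 : algebraMap A Q v ≠ 0 :=
    IsFractionRing.to_map_ne_zero_of_mem_nonZeroDivisors v.2
  have h1 : z * algebraMap A Q v = algebraMap A Q u := by
    rw [← e]; exact IsLocalization.mk'_spec _ _ _
  have h2 : u ^ 2 * d = p * v ^ 2 := by
    apply IsFractionRing.injective A Q
    simp only [map_mul, map_pow, hp, ← h1]; ring
  have hc : IsCoprime (v : A) u := (huv.symm).isCoprime
  have h3 : (v : A) * v ∣ d := by
    have : IsCoprime ((v : A) * v) (u ^ 2) := by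
      rw [← pow_two]; exact hc.pow
    exact this.dvd_of_dvd_mul_left ⟨p, by rw [h2]; ring⟩
  obtain ⟨w, hw⟩ := hd _ h3
  refine ⟨u * (↑w⁻¹ : A), ?_⟩
  have h4 : algebraMap A Q v * algebraMap A Q (↑w⁻¹ : A) = 1 := by
    rw [← map_mul, ← hw, Units.mul_inv, map_one]
  rw [map_mul, ← h1, mul_assoc, h4, mul_one]

/-- Splitting of `B[t]` when `t² ∈ B`. -/
theorem adjoin_split {R E : Type} [CommRing R] [CommRing E] [Algebra R E] (S : Set E) (t : E)
    (ht : t ^ 2 ∈ Algebra.adjoin R S) (z : E) (hz : z ∈ Algebra.adjoin R (insert t S)) :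
    ∃ a ∈ Algebra.adjoin R S, ∃ b ∈ Algebra.adjoin R S, z = a + b * t := by
  induction hz using Algebra.adjoin_induction with
  | mem x hx =>
    rcases hx with rfl | hm
    · exact ⟨0, zero_mem _, 1, one_mem _, by ring⟩
    · exact ⟨x, Algebra.subset_adjoin hm, 0, zero_mem _, by ring⟩
  | algebraMap r => exact ⟨_, Subalgebra.algebraMap_mem _ r, 0, zero_mem _, by ring⟩
  | add x w _ _ hx hw =>
    obtain ⟨a, ha, b, hb, rfl⟩ := hx
    obtain ⟨a', ha', b', hb', rfl⟩ := hw
    exact ⟨a + a', add_mem ha ha', b + b', add_mem hb hb', by ring⟩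
  | mul x w _ _ hx hw =>
    obtain ⟨a, ha, b, hb, rfl⟩ := hx
    obtain ⟨a', ha', b', hb', rfl⟩ := hw
    refine ⟨a * a' + b * b' * t ^ 2,
      add_mem (mul_mem ha ha') (mul_mem (mul_mem hb hb') ht),
      a * b' + b * a', add_mem (mul_mem ha hb') (mul_mem hb ha'), ?_⟩
    ring

theorem exists_conj {Q E : Type} [Field Q] [Field E] [Algebra Q E]
    [IsAlgClosed E] [Algebra.IsAlgebraic Q E] (L : IntermediateField Q E) (t : E) (ht : t ∉ L)
    (c : Q) (hc : t ^ 2 = algebraMap Q E c) : ∃ σ : E ≃ₐ[L] E, σ t = - t := by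
  have hi : IsIntegral L t := Algebra.IsIntegral.isIntegral t
  have : Algebra.IsAlgebraic L E := Algebra.IsAlgebraic.tower_top (K := Q) L
  have : IsAlgClosure L E := ⟨inferInstance, inferInstance⟩
  have hmin : minpoly L t = X ^ 2 - C (algebraMap Q L c) := by
    symm
    have hm : (X ^ 2 - C (algebraMap Q L c) : L[X]).Monic := monic_X_pow_sub_C _ two_ne_zero
    have hev : aeval t (X ^ 2 - C (algebraMap Q L c) : L[X]) = 0 := by
      simp [hc, ← IsScalarTower.algebraMap_apply]
    apply minpoly.eq_of_irreducible_of_monic _ hev hm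
    rw [Polynomial.Monic.irreducible_iff_roots_eq_zero_of_degree_le_three hm]
    rotate_left
    · rw [natDegree_X_pow_sub_C]
    · rw [natDegree_X_pow_sub_C]; norm_num
    · rw [Multiset.eq_zero_iff_forall_notMem]
      intro s hs
      rw [mem_roots hm.ne_zero] at hs
      have hs2 : s ^ 2 = algebraMap Q L c := by simpa [sub_eq_zero] using hs
      have hs3 : (s : E) ^ 2 = t ^ 2 := by
        rw [hc, ← IntermediateField.coe_pow, hs2]; rfl
      rcases sq_eq_sq_iff_eq_or_eq_neg.1 hs3 with h | h
      · exact ht (h ▸ s.2)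
      · apply ht
        have : t = -(s : E) := by rw [h, neg_neg]
        rw [this]; exact neg_mem s.2
  obtain ⟨σ, hσ⟩ := minpoly.exists_algEquiv_of_root' (K := L) (x := -t) (y := t)
    hi.isAlgebraic (by
      rw [hmin]; simp [hc, ← IsScalarTower.algebraMap_apply])
  exact ⟨σ, hσ⟩

theorem notMem_of {F Q E : Type} [Field F] [Field Q] [Field E] [Algebra F[X] Q]
    [IsFractionRing F[X] Q] [Algebra Q E] [Algebra F[X] E] [IsScalarTower F[X] Q E]
    [Algebra.IsAlgebraic Q E]
    (y : ℤ → E) (hy : ∀ n, y n ^ 2 = algebraMap F[X] E (dp F n)) (I : Finset ℤ)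
    (P : ∀ J : Finset ℤ, (0 : ℤ) ∉ J → Disjoint I J →
      ∀ z ∈ Algebra.adjoin Q (y '' (I : Set ℤ)), IsIntegral F[X] (z * ∏ j ∈ J, y j) →
        z ∈ Algebra.adjoin F[X] (y '' (I : Set ℤ)))
    (n : ℤ) (hn : n ≠ 0) (hnI : n ∉ I) : y n ∉ Algebra.adjoin Q (y '' (I : Set ℤ)) := by
  intro hmem
  have hinj : Function.Injective (algebraMap F[X] E) := by
    rw [IsScalarTower.algebraMap_eq F[X] Q E]
    exact (algebraMap Q E).injective.comp (IsFractionRing.injective F[X] Q)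
  have hInt : ∀ m, IsIntegral F[X] (y m) := fun m =>
    IsIntegral.of_pow (n := 2) two_pos (by rw [hy]; exact isIntegral_algebraMap)
  have hd0 : dp F n ≠ 0 := (monic_X_pow_sub_C _ two_ne_zero).ne_zero
  have hy0 : y n ≠ 0 := by
    intro h
    have := hy n
    rw [h, zero_pow two_ne_zero, eq_comm, map_eq_zero_iff _ hinj] at this
    exact hd0 this
  have hinv : (y n)⁻¹ ∈ Algebra.adjoin Q (y '' (I : Set ℤ)) := by
    rw [← IntermediateField.adjoin_toSubalgebra_of_isAlgebraic
      (fun x _ => Algebra.IsAlgebraic.isAlgebraic x)] at hmem ⊢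
    exact inv_mem (S := IntermediateField Q E) hmem
  have h1 := P {n} (by simpa using hn.symm) (by simpa using hnI) _ hinv (by
    rw [Finset.prod_singleton, inv_mul_cancel₀ hy0]; exact isIntegral_one)
  have h2 : IsIntegral F[X] (y n)⁻¹ := by
    have : Algebra.adjoin F[X] (y '' (I : Set ℤ)) ≤ integralClosure F[X] E := by
      rw [Algebra.adjoin_le_iff]
      rintro _ ⟨m, _, rfl⟩
      exact hInt m
    exact this h1
  have h3 : IsIntegral F[X] ((algebraMap F[X] Q (dp F n))⁻¹) := by
    rw [← isIntegral_algebraMap_iff (algebraMap Q E).injective, map_inv₀,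
      ← IsScalarTower.algebraMap_apply, ← hy, ← inv_pow]
    exact h2.pow 2
  obtain ⟨p, hp⟩ := (IsIntegrallyClosed.isIntegral_iff (R := F[X])).1 h3
  have h4 : dp F n * p = 1 := by
    apply IsFractionRing.injective F[X] Q
    rw [map_mul, hp, map_one, mul_inv_cancel₀]
    exact (map_ne_zero_iff _ (IsFractionRing.injective F[X] Q)).2 hd0
  have h5 : IsUnit (dp F n) := IsUnit.of_mul_eq_one _ h4
  have h6 := natDegree_eq_zero_of_isUnit h5
  rw [dp, natDegree_X_pow_sub_C] at h6
  exact two_ne_zero h6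

theorem main_P {F Q E : Type} [Field F] [CharZero F] [Field Q] [Field E] [Algebra F[X] Q]
    [IsFractionRing F[X] Q] [Algebra Q E] [Algebra F[X] E] [IsScalarTower F[X] Q E]
    [Algebra.IsAlgebraic Q E] [IsAlgClosed E]
    (y : ℤ → E) (hy : ∀ n, y n ^ 2 = algebraMap F[X] E (dp F n)) (I : Finset ℤ) :
    (0 : ℤ) ∉ I → ∀ J : Finset ℤ, (0 : ℤ) ∉ J → Disjoint I J →
      ∀ z ∈ Algebra.adjoin Q (y '' (I : Set ℤ)), IsIntegral F[X] (z * ∏ j ∈ J, y j) →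
        z ∈ Algebra.adjoin F[X] (y '' (I : Set ℤ)) := by
  have hyprod : ∀ J : Finset ℤ, (∏ j ∈ J, y j) ^ 2 = algebraMap F[X] E (∏ j ∈ J, dp F j) := by
    intro J
    rw [← Finset.prod_pow, map_prod]
    exact Finset.prod_congr rfl fun j _ => hy j
  have hyQ : ∀ n, y n ^ 2 = algebraMap Q E (algebraMap F[X] Q (dp F n)) := fun n => by
    rw [hy, ← IsScalarTower.algebraMap_apply]
  induction I using Finset.induction_on with
  | empty =>
    intro _ J hJ _ z hz hInt
    simp only [Finset.coe_empty, Set.image_empty, Algebra.adjoin_empty] at hz ⊢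
    obtain ⟨q, rfl⟩ := Algebra.mem_bot.1 hz
    have h := hInt.pow 2
    rw [mul_pow, hyprod, IsScalarTower.algebraMap_apply F[X] Q E, ← map_pow, ← map_mul,
      isIntegral_algebraMap_iff (algebraMap Q E).injective] at h
    obtain ⟨a, rfl⟩ := base_case _ (dp_sqfree J hJ) q h
    rw [← IsScalarTower.algebraMap_apply]
    exact Subalgebra.algebraMap_mem _ a
  | insert n I hnI ih =>
    intro h0 J hJ hdis z hz hInt
    have h0I : (0 : ℤ) ∉ I := fun h => h0 (Finset.mem_insert_of_mem h)
    have hn0 : n ≠ 0 := fun h => h0 (h ▸ Finset.mem_insert_self _ _)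
    have hnJ : n ∉ J := Finset.disjoint_left.1 hdis (Finset.mem_insert_self _ _)
    have hIJ : Disjoint I J := hdis.mono_left (Finset.subset_insert _ _)
    have P := ih h0I
    have hnot := notMem_of (Q := Q) y hy I P n hn0 hnI
    obtain ⟨a, ha, b, hb, rfl⟩ := adjoin_split (R := Q) (y '' (I : Set ℤ)) (y n)
      (by rw [hyQ]; exact Subalgebra.algebraMap_mem _ _) z
      (by rwa [Finset.coe_insert, Set.image_insert_eq] at hz)
    have hadj := IntermediateField.adjoin_toSubalgebra_of_isAlgebraic (F := Q)
      (S := y '' (I : Set ℤ)) (fun x _ => Algebra.IsAlgebraic.isAlgebraic x)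
    have hLmem : ∀ x, x ∈ Algebra.adjoin Q (y '' (I : Set ℤ)) ↔
        x ∈ IntermediateField.adjoin Q (y '' (I : Set ℤ)) := fun x => by
      rw [← hadj]; rfl
    obtain ⟨σ, hσ⟩ := exists_conj (IntermediateField.adjoin Q (y '' (I : Set ℤ))) (y n)
      (fun h => hnot ((hLmem _).2 h)) _ (hyQ n)
    have hσL : ∀ x ∈ Algebra.adjoin Q (y '' (I : Set ℤ)), σ x = x := fun x hx =>
      σ.commutes ⟨x, (hLmem x).1 hx⟩
    have hσF : ∀ p : F[X], σ (algebraMap F[X] E p) = algebraMap F[X] E p := fun p => by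
      apply hσL
      rw [IsScalarTower.algebraMap_apply F[X] Q E]
      exact Subalgebra.algebraMap_mem _ _
    let τ : E →ₐ[F[X]] E := { (σ : E →+* E) with commutes' := hσF }
    have hτ : ∀ x, τ x = σ x := fun x => rfl
    have hInt2 : IsIntegral F[X] ((a - b * y n) * ∏ j ∈ J, y j) := by
      apply IsIntegral.of_pow (n := 2) two_pos
      have h := (hInt.pow 2).map τ
      rw [mul_pow, hyprod, hτ, map_mul, hσF, map_pow, map_add, map_mul, hσ, hσL a ha, hσL b hb,
        ← hyprod, ← mul_pow] at h
      convert h using 3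
      ring
    have half : IsIntegral F[X] (algebraMap F[X] E (C (2 : F)⁻¹)) := isIntegral_algebraMap
    have half2 : algebraMap F[X] E (C (2 : F)⁻¹) * 2 = 1 := by
      have : (2 : E) = algebraMap F[X] E (C (2 : F)) := by
        rw [show (C (2 : F) : F[X]) = 2 from map_ofNat C 2, map_ofNat]
      rw [this, ← map_mul, ← C_mul, inv_mul_cancel₀ two_ne_zero]; simp
    have ha' : IsIntegral F[X] (a * ∏ j ∈ J, y j) := by
      have e : a * ∏ j ∈ J, y j = algebraMap F[X] E (C (2 : F)⁻¹) *
          ((a + b * y n) * ∏ j ∈ J, y j + (a - b * y n) * ∏ j ∈ J, y j) := by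
        linear_combination (-a * ∏ j ∈ J, y j) * half2
      rw [e]
      exact half.mul (hInt.add hInt2)
    have hb' : IsIntegral F[X] (b * ∏ j ∈ insert n J, y j) := by
      rw [Finset.prod_insert hnJ]
      have e : b * (y n * ∏ j ∈ J, y j) = algebraMap F[X] E (C (2 : F)⁻¹) *
          ((a + b * y n) * ∏ j ∈ J, y j - (a - b * y n) * ∏ j ∈ J, y j) := by
        linear_combination (-b * y n * ∏ j ∈ J, y j) * half2
      rw [e]
      exact half.mul (hInt.sub hInt2)
    have ha2 := P J hJ hIJ a ha ha'
    have hb2 := P (insert n J) (by simp [hJ, hn0.symm])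
      (Finset.disjoint_insert_right.2 ⟨hnI, hIJ⟩) b hb hb'
    have hle : Algebra.adjoin F[X] (y '' (I : Set ℤ)) ≤
        Algebra.adjoin F[X] (y '' ((insert n I : Finset ℤ) : Set ℤ)) :=
      Algebra.adjoin_mono (Set.image_mono (by simp))
    exact add_mem (hle ha2) (mul_mem (hle hb2)
      (Algebra.subset_adjoin ⟨n, by simp, rfl⟩))

theorem xC_rel (F : Type) [Field F] (m n : ℤ) :
    xC F n ^ 2 + (n : WeylC F) = xC F m ^ 2 + (m : WeylC F) := by
  have h : Ideal.Quotient.mk (Ideal.span { p : MvPolynomial ℤ F |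
    ∃ m n : ℤ, p = MvPolynomial.X n ^ 2 + (n : MvPolynomial ℤ F)
      - MvPolynomial.X m ^ 2 - (m : MvPolynomial ℤ F) }) (MvPolynomial.X n ^ 2 +
      (n : MvPolynomial ℤ F) - MvPolynomial.X m ^ 2 - (m : MvPolynomial ℤ F)) = 0 :=
    Ideal.Quotient.eq_zero_iff_mem.2 (Ideal.subset_span ⟨m, n, rfl⟩)
  simp only [map_sub, map_add, map_pow, map_intCast] at h
  have h' : xC F n ^ 2 + (n : WeylC F) - xC F m ^ 2 - (m : WeylC F) = 0 := h
  linear_combination h'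

/-- The evaluation map `C → E`, `x_n ↦ y_n`. -/
def phi {F E : Type} [Field F] [Field E] [Algebra F E] (y : ℤ → E)
    (hy : ∀ m n : ℤ, y n ^ 2 + (n : E) = y m ^ 2 + (m : E)) : WeylC F →ₐ[F] E :=
  Ideal.Quotient.liftₐ _ (MvPolynomial.aeval y) (by
    intro a ha
    have hle : Ideal.span { p : MvPolynomial ℤ F |
        ∃ m n : ℤ, p = MvPolynomial.X n ^ 2 + (n : MvPolynomial ℤ F)
        - MvPolynomial.X m ^ 2 - (m : MvPolynomial ℤ F) } ≤
        RingHom.ker (MvPolynomial.aeval (R := F) y) := by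
      rw [Ideal.span_le]
      rintro _ ⟨m, n, rfl⟩
      simp only [SetLike.mem_coe, RingHom.mem_ker, map_sub, map_add, map_pow, map_intCast,
        MvPolynomial.aeval_X]
      linear_combination hy m n
    exact hle ha)

theorem phi_xC {F E : Type} [Field F] [Field E] [Algebra F E] (y : ℤ → E)
    (hy : ∀ m n : ℤ, y n ^ 2 + (n : E) = y m ^ 2 + (m : E)) (n : ℤ) :
    phi (F := F) y hy (xC F n) = y n := by
  have : phi (F := F) y hy (xC F n) = MvPolynomial.aeval (R := F) y (MvPolynomial.X n) := rfl
  rw [this, MvPolynomial.aeval_X]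

theorem RI_mono (F : Type) [Field F] {I J : Finset ℤ} (h : I ⊆ J) : RI F I ≤ RI F J :=
  Algebra.adjoin_mono (Set.union_subset_union_right _ (Set.image_mono (by exact_mod_cast h)))

theorem xC_mem (F : Type) [Field F] (n : ℤ) : ∃ I : Finset ℤ, (0 : ℤ) ∉ I ∧ xC F n ∈ RI F I := by
  by_cases h : n = 0
  · subst h
    exact ⟨∅, by simp, Algebra.subset_adjoin (Or.inl rfl)⟩
  · exact ⟨{n}, by simpa using Ne.symm h, Algebra.subset_adjoin (Or.inr ⟨n, by simp, rfl⟩)⟩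

theorem exists_mem_RI (F : Type) [Field F] (z : WeylC F) :
    ∃ I : Finset ℤ, (0 : ℤ) ∉ I ∧ z ∈ RI F I := by
  obtain ⟨p, rfl⟩ := Ideal.Quotient.mk_surjective z
  induction p using MvPolynomial.induction_on with
  | C a => exact ⟨∅, by simp, Subalgebra.algebraMap_mem (RI F ∅) a⟩
  | add p q hp hq =>
    obtain ⟨I, hI, h1⟩ := hp
    obtain ⟨J, hJ, h2⟩ := hq
    refine ⟨I ∪ J, by simp [hI, hJ], ?_⟩
    rw [map_add]
    exact add_mem (RI_mono F Finset.subset_union_left h1) (RI_mono F Finset.subset_union_right h2)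
  | mul_X p n hp =>
    obtain ⟨I, hI, h1⟩ := hp
    obtain ⟨J, hJ, h2⟩ := xC_mem F n
    refine ⟨I ∪ J, by simp [hI, hJ], ?_⟩
    rw [map_mul]
    exact mul_mem (RI_mono F Finset.subset_union_left h1) (RI_mono F Finset.subset_union_right h2)

theorem phi_mem {F E : Type} [Field F] [Field E] [Algebra F[X] E]
    [Algebra F E] [IsScalarTower F F[X] E]
    (y : ℤ → E) (hy0 : y 0 = algebraMap F[X] E X)
    (hyr : ∀ m n : ℤ, y n ^ 2 + (n : E) = y m ^ 2 + (m : E)) (I : Finset ℤ) (z : WeylC F)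
    (hz : z ∈ RI F I) :
    phi (F := F) y hyr z ∈ Algebra.adjoin F[X] (y '' (I : Set ℤ)) := by
  have h : RI F I ≤ ((Algebra.adjoin F[X] (y '' (I : Set ℤ))).restrictScalars F).comap
      (phi (F := F) y hyr) := by
    refine Algebra.adjoin_le ?_
    rintro _ (rfl | ⟨n, hn, rfl⟩)
    · change phi (F := F) y hyr (xC F 0) ∈ Algebra.adjoin F[X] (y '' (I : Set ℤ))
      rw [phi_xC, hy0]
      exact Subalgebra.algebraMap_mem _ _
    · change phi (F := F) y hyr (xC F n) ∈ Algebra.adjoin F[X] (y '' (I : Set ℤ))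
      rw [phi_xC]
      exact Algebra.subset_adjoin ⟨n, hn, rfl⟩
  exact h hz

theorem phi_aeval {F E : Type} [Field F] [Field E] [Algebra F[X] E]
    [Algebra F E] [IsScalarTower F F[X] E]
    (y : ℤ → E) (hy0 : y 0 = algebraMap F[X] E X)
    (hyr : ∀ m n : ℤ, y n ^ 2 + (n : E) = y m ^ 2 + (m : E)) (p : F[X]) :
    phi (F := F) y hyr (aeval (xC F 0) p) = algebraMap F[X] E p := by
  rw [← aeval_algHom_apply, phi_xC, hy0, aeval_algebraMap_apply, aeval_X_left_apply]

theorem phi_surj {F E : Type} [Field F] [Field E] [Algebra F[X] E]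
    [Algebra F E] [IsScalarTower F F[X] E]
    (y : ℤ → E) (hy0 : y 0 = algebraMap F[X] E X)
    (hyr : ∀ m n : ℤ, y n ^ 2 + (n : E) = y m ^ 2 + (m : E)) (I : Finset ℤ) (w : E)
    (hw : w ∈ Algebra.adjoin F[X] (y '' (I : Set ℤ))) :
    ∃ z ∈ RI F I, phi (F := F) y hyr z = w := by
  induction hw using Algebra.adjoin_induction with
  | mem x hx =>
    obtain ⟨n, hn, rfl⟩ := hx
    exact ⟨xC F n, Algebra.subset_adjoin (Or.inr ⟨n, hn, rfl⟩), phi_xC _ _ _⟩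
  | algebraMap p =>
    refine ⟨aeval (xC F 0) p, ?_, phi_aeval y hy0 hyr p⟩
    have h1 : xC F 0 ∈ RI F I := Algebra.subset_adjoin (Or.inl rfl)
    exact Algebra.adjoin_le (Set.singleton_subset_iff.2 h1)
      (Polynomial.aeval_mem_adjoin_singleton F (xC F 0))
  | add x w _ _ hx hw =>
    obtain ⟨a, ha, rfl⟩ := hx
    obtain ⟨b, hb, rfl⟩ := hw
    exact ⟨a + b, add_mem ha hb, map_add _ _ _⟩
  | mul x w _ _ hx hw =>
    obtain ⟨a, ha, rfl⟩ := hx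
    obtain ⟨b, hb, rfl⟩ := hw
    exact ⟨a * b, mul_mem ha hb, map_mul _ _ _⟩

theorem adjoin_le {F Q E : Type} [Field F] [Field Q] [Field E] [Algebra F[X] Q]
    [Algebra Q E] [Algebra F[X] E] [IsScalarTower F[X] Q E]
    (y : ℤ → E) (I : Finset ℤ) (z : E)
    (hz : z ∈ Algebra.adjoin F[X] (y '' (I : Set ℤ))) :
    z ∈ Algebra.adjoin Q (y '' (I : Set ℤ)) := by
  have h : Algebra.adjoin F[X] (y '' (I : Set ℤ)) ≤
      (Algebra.adjoin Q (y '' (I : Set ℤ))).restrictScalars F[X] :=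
    Algebra.adjoin_le Algebra.subset_adjoin
  exact h hz

theorem phi_inj_RI {F : Type} (Q : Type) {E : Type} [Field F] [CharZero F] [Field Q] [Field E]
    [Algebra F[X] Q] [IsFractionRing F[X] Q] [Algebra Q E] [Algebra F[X] E]
    [IsScalarTower F[X] Q E] [Algebra.IsAlgebraic Q E] [IsAlgClosed E] [Algebra F E]
    [IsScalarTower F F[X] E]
    (y : ℤ → E) (hy0 : y 0 = algebraMap F[X] E X)
    (hy : ∀ n, y n ^ 2 = algebraMap F[X] E (dp F n))
    (hyr : ∀ m n : ℤ, y n ^ 2 + (n : E) = y m ^ 2 + (m : E)) (I : Finset ℤ) :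
    (0 : ℤ) ∉ I → ∀ z ∈ RI F I, phi (F := F) y hyr z = 0 → z = 0 := by
  have hinj : Function.Injective (algebraMap F[X] E) := by
    rw [IsScalarTower.algebraMap_eq F[X] Q E]
    exact (algebraMap Q E).injective.comp (IsFractionRing.injective F[X] Q)
  induction I using Finset.induction_on with
  | empty =>
    intro _ z hz h
    rw [RI, Finset.coe_empty, Set.image_empty, Set.union_empty,
      Algebra.adjoin_singleton_eq_range_aeval] at hz
    obtain ⟨p, rfl⟩ := hz
    have h' : algebraMap F[X] E p = 0 := by rw [← phi_aeval y hy0 hyr]; exact h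
    rw [map_eq_zero_iff _ hinj] at h'
    rw [h']; exact map_zero _
  | insert n I hnI ih =>
    intro h0 z hz h
    have h0I : (0 : ℤ) ∉ I := fun h => h0 (Finset.mem_insert_of_mem h)
    have hn0 : n ≠ 0 := fun h => h0 (h ▸ Finset.mem_insert_self _ _)
    have hsq : xC F n ^ 2 ∈ RI F I := by
      have e : xC F n ^ 2 = xC F 0 ^ 2 - (n : WeylC F) := by
        have := xC_rel F 0 n
        push_cast at this
        linear_combination this
      have h1 : xC F 0 ∈ RI F I := Algebra.subset_adjoin (Or.inl rfl)
      rw [e]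
      exact sub_mem (pow_mem h1 2) (intCast_mem _ n)
    have hz' : z ∈ Algebra.adjoin F (insert (xC F n) ({xC F 0} ∪ xC F '' (I : Set ℤ))) := by
      rw [RI, Finset.coe_insert, Set.image_insert_eq, Set.union_insert] at hz
      exact hz
    obtain ⟨a, ha, b, hb, rfl⟩ := adjoin_split _ _ hsq z hz'
    have hnot := notMem_of (Q := Q) y hy I (main_P y hy I h0I) n hn0 hnI
    have hLmem : ∀ x, x ∈ Algebra.adjoin Q (y '' (I : Set ℤ)) ↔
        x ∈ IntermediateField.adjoin Q (y '' (I : Set ℤ)) := fun x => by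
      rw [← IntermediateField.adjoin_toSubalgebra_of_isAlgebraic (F := Q)
        (S := y '' (I : Set ℤ)) (fun x _ => Algebra.IsAlgebraic.isAlgebraic x)]; rfl
    have hpa := (hLmem _).1 (adjoin_le (Q := Q) y I _ (phi_mem y hy0 hyr I a ha))
    have hpb := (hLmem _).1 (adjoin_le (Q := Q) y I _ (phi_mem y hy0 hyr I b hb))
    rw [map_add, map_mul, phi_xC] at h
    have hb0 : phi (F := F) y hyr b = 0 := by
      by_contra hne
      apply hnot
      rw [hLmem]
      have : y n = - phi (F := F) y hyr a * (phi (F := F) y hyr b)⁻¹ := by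
        field_simp
        linear_combination h
      rw [this]
      exact mul_mem (neg_mem hpa) (inv_mem hpb)
    rw [hb0, zero_mul, add_zero] at h
    rw [ih h0I a ha h, ih h0I b hb hb0]; ring

theorem phi_inj {F : Type} (Q : Type) {E : Type} [Field F] [CharZero F] [Field Q] [Field E]
    [Algebra F[X] Q] [IsFractionRing F[X] Q] [Algebra Q E] [Algebra F[X] E]
    [IsScalarTower F[X] Q E] [Algebra.IsAlgebraic Q E] [IsAlgClosed E] [Algebra F E]
    [IsScalarTower F F[X] E]
    (y : ℤ → E) (hy0 : y 0 = algebraMap F[X] E X)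
    (hy : ∀ n, y n ^ 2 = algebraMap F[X] E (dp F n))
    (hyr : ∀ m n : ℤ, y n ^ 2 + (n : E) = y m ^ 2 + (m : E)) :
    Function.Injective (phi (F := F) y hyr) := by
  rw [injective_iff_map_eq_zero]
  intro z hz
  obtain ⟨I, hI, h⟩ := exists_mem_RI F z
  exact phi_inj_RI Q y hy0 hy hyr I hI z h hz

theorem isDedekind_of_equiv {A B : Type} [CommRing A] [CommRing B] [IsDedekindDomain B]
    (e : A ≃+* B) : IsDedekindDomain A := by
  have h1 : IsDomain A := e.toMulEquiv.isDomain B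
  have h2 : IsNoetherianRing A := isNoetherianRing_of_ringEquiv B e.symm
  have h3 : Ring.DimensionLEOne A := Ring.DimensionLEOne.of_ringEquiv e
  have h4 : IsIntegrallyClosed A := IsIntegrallyClosed.of_equiv e.symm
  have h5 : IsDedekindRing A := { h2, h3, h4 with }
  exact { h1, h5 with }

theorem dedekind_RI {F : Type} (Q : Type) {E : Type} [Field F] [CharZero F] [Field Q] [Field E]
    [Algebra F[X] Q] [IsFractionRing F[X] Q] [Algebra Q E] [Algebra F[X] E]
    [IsScalarTower F[X] Q E] [Algebra.IsAlgebraic Q E] [IsAlgClosed E] [Algebra F E]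
    [IsScalarTower F F[X] E]
    (y : ℤ → E) (hy0 : y 0 = algebraMap F[X] E X)
    (hy : ∀ n, y n ^ 2 = algebraMap F[X] E (dp F n))
    (hyr : ∀ m n : ℤ, y n ^ 2 + (n : E) = y m ^ 2 + (m : E)) (I : Finset ℤ) (hI : (0 : ℤ) ∉ I) :
    IsDedekindDomain (RI F I) := by
  have hLmem : ∀ x, x ∈ Algebra.adjoin Q (y '' (I : Set ℤ)) ↔
      x ∈ IntermediateField.adjoin Q (y '' (I : Set ℤ)) := fun x => by
    rw [← IntermediateField.adjoin_toSubalgebra_of_isAlgebraic (F := Q)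
      (S := y '' (I : Set ℤ)) (fun x _ => Algebra.IsAlgebraic.isAlgebraic x)]; rfl
  have hInt : ∀ z ∈ Algebra.adjoin F[X] (y '' (I : Set ℤ)), IsIntegral F[X] z := by
    have : Algebra.adjoin F[X] (y '' (I : Set ℤ)) ≤ integralClosure F[X] E := by
      rw [Algebra.adjoin_le_iff]
      rintro _ ⟨m, _, rfl⟩
      exact IsIntegral.of_pow (n := 2) two_pos (by rw [hy]; exact isIntegral_algebraMap)
    exact this
  let L := IntermediateField.adjoin Q (y '' (I : Set ℤ))
  have hL0 : ∀ z : RI F I, phi (F := F) y hyr z ∈ L := fun z =>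
    (hLmem _).1 (adjoin_le (Q := Q) y I _ (phi_mem y hy0 hyr I z z.2))
  have htow : IsScalarTower F[X] L E := IsScalarTower.of_algebraMap_eq fun _ => rfl
  have hinjL : Function.Injective (algebraMap L E) := (algebraMap L E).injective
  have hL1 : ∀ z : RI F I, (⟨phi (F := F) y hyr z, hL0 z⟩ : L) ∈ integralClosure F[X] L := by
    intro z
    rw [mem_integralClosure_iff, ← isIntegral_algebraMap_iff hinjL]
    exact hInt _ (phi_mem y hy0 hyr I z z.2)
  let f : RI F I →+* integralClosure F[X] L :=
    { toFun := fun z => ⟨⟨phi (F := F) y hyr z, hL0 z⟩, hL1 z⟩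
      map_one' := Subtype.ext (Subtype.ext (map_one (phi (F := F) y hyr)))
      map_zero' := Subtype.ext (Subtype.ext (map_zero (phi (F := F) y hyr)))
      map_add' := fun a b => Subtype.ext (Subtype.ext (map_add (phi (F := F) y hyr) (a : WeylC F) b))
      map_mul' := fun a b => Subtype.ext (Subtype.ext (map_mul (phi (F := F) y hyr) (a : WeylC F) b)) }
  have hf : Function.Bijective f := by
    constructor
    · intro a b hab
      have h1 : phi (F := F) y hyr a = phi (F := F) y hyr b :=
        congrArg (fun t : integralClosure F[X] L => ((t : L) : E)) hab
      exact Subtype.ext (phi_inj Q y hy0 hy hyr h1)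
    · rintro ⟨w, hw⟩
      rw [mem_integralClosure_iff, ← isIntegral_algebraMap_iff hinjL] at hw
      have h1 := main_P (Q := Q) y hy I hI ∅ (by simp) (by simp) (w : E) ((hLmem _).2 w.2)
        (by rw [Finset.prod_empty, mul_one]; exact hw)
      obtain ⟨z, hz, hzw⟩ := phi_surj y hy0 hyr I _ h1
      exact ⟨⟨z, hz⟩, Subtype.ext (Subtype.ext hzw)⟩
  have : CharZero Q := charZero_of_injective_algebraMap (IsFractionRing.injective F[X] Q)
  have : FiniteDimensional Q L :=
    IntermediateField.finiteDimensional_adjoin (fun x _ => Algebra.IsIntegral.isIntegral x)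
  have : IsDedekindDomain (integralClosure F[X] L) := integralClosure.isDedekindDomain F[X] Q L
  exact isDedekind_of_equiv (RingEquiv.ofBijective f hf)

theorem exists_y (F : Type) [Field F] :
    ∃ y : ℤ → AlgebraicClosure (FractionRing F[X]),
      y 0 = algebraMap F[X] (AlgebraicClosure (FractionRing F[X])) X ∧
      (∀ n, y n ^ 2 = algebraMap F[X] (AlgebraicClosure (FractionRing F[X])) (dp F n)) ∧
      (∀ m n : ℤ, y n ^ 2 + (n : AlgebraicClosure (FractionRing F[X])) = y m ^ 2 + m) := by
  have h : ∀ n : ℤ, ∃ t : AlgebraicClosure (FractionRing F[X]),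
      t ^ 2 = algebraMap F[X] (AlgebraicClosure (FractionRing F[X])) (dp F n) ∧
      (n = 0 → t = algebraMap F[X] (AlgebraicClosure (FractionRing F[X])) X) := by
    intro n
    by_cases hn : n = 0
    · subst hn
      refine ⟨algebraMap F[X] _ X, ?_, fun _ => rfl⟩
      rw [← map_pow, dp, Int.cast_zero, C_0, sub_zero]
    · obtain ⟨t, ht⟩ := IsAlgClosed.exists_pow_nat_eq
        (algebraMap F[X] (AlgebraicClosure (FractionRing F[X])) (dp F n)) two_pos
      exact ⟨t, ht, fun h => absurd h hn⟩
  choose y h1 h2 using h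
  refine ⟨y, h2 0 rfl, h1, ?_⟩
  have h3 : ∀ n : ℤ, y n ^ 2 + (n : AlgebraicClosure (FractionRing F[X])) =
      algebraMap F[X] (AlgebraicClosure (FractionRing F[X])) (X ^ 2) := by
    intro n
    rw [h1, dp, map_sub, C_eq_intCast, map_intCast, sub_add_cancel]
  intro m n
  rw [h3, h3]

end WeylAux

variable [CharZero k]

set_option synthInstance.maxHeartbeats 1000000 in
set_option maxHeartbeats 1000000 in
/-- `C` is an ascending union of Dedekind domains: each `R_I`
(for finite `I ⊆ ℤ ∖ {0}`) is a Dedekind domain, `R_I ⊆ R_J` when `I ⊆ J`, the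
union of all the `R_I` is `C`, and `C` is flat over each `R_I`. -/
theorem weylC_union_of_dedekind :
    (∀ I : Finset ℤ, (0 : ℤ) ∉ I → IsDedekindDomain ↥(RI k I)) ∧
    (∀ I : Finset ℤ, (0 : ℤ) ∉ I → Module.Flat ↥(RI k I) (WeylC k)) ∧
    (∀ I J : Finset ℤ, I ⊆ J → RI k I ≤ RI k J) ∧
    (⨆ I : {I : Finset ℤ // (0 : ℤ) ∉ I}, RI k I.1) = ⊤ := by
  obtain ⟨y, hy0, hy, hyr⟩ := WeylAux.exists_y k
  have hD : ∀ I : Finset ℤ, (0 : ℤ) ∉ I → IsDedekindDomain ↥(RI k I) :=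
    WeylAux.dedekind_RI (FractionRing (Polynomial k)) y hy0 hy hyr
  refine ⟨hD, ?_, fun I J h => WeylAux.RI_mono k h, ?_⟩
  · intro I hI
    have := hD I hI
    have hdom : IsDomain (WeylC k) :=
      (WeylAux.phi_inj (FractionRing (Polynomial k)) y hy0 hy hyr).isDomain
        (WeylAux.phi (F := k) y hyr).toRingHom
    rw [IsDedekindDomain.flat_iff_torsion_eq_bot, ← Submodule.isTorsionFree_iff_torsion_eq_bot]
    infer_instance
  · rw [eq_top_iff]
    intro z _
    obtain ⟨I, hI, h⟩ := WeylAux.exists_mem_RI k z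
    exact le_iSup (fun I : {I : Finset ℤ // (0 : ℤ) ∉ I} => RI k I.1) ⟨I, hI⟩ h
end
end

section
/- For finite subsets I, J of ℤ, there is an isomorphism of ℤ_fin-graded C-modules Cx_I ⊕ Cx_J ≅ Cx_{I∪J} ⊕ Cx_{I∩J}. -/
open scoped symmDiff

noncomputable section

variable (k : Type) [Field k]

/-- The graded ideal `Cx_I` generated by `x_I`. -/
def Cx (I : Finset ℤ) : Ideal (WeylC k) := Ideal.span {xS k I}

theorem xC_sq (n : ℤ) : xC k n ^ 2 = xC k 0 ^ 2 - (n : WeylC k) := by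
  have h : (Ideal.Quotient.mk (Ideal.span { p : MvPolynomial ℤ k |
    ∃ m n : ℤ, p = MvPolynomial.X n ^ 2 + (n : MvPolynomial ℤ k)
      - MvPolynomial.X m ^ 2 - (m : MvPolynomial ℤ k) }))
      (MvPolynomial.X n ^ 2 + (n : MvPolynomial ℤ k)
      - MvPolynomial.X 0 ^ 2 - ((0 : ℤ) : MvPolynomial ℤ k)) = 0 :=
    Ideal.Quotient.eq_zero_iff_mem.mpr (Ideal.subset_span ⟨0, n, rfl⟩)
  simp only [map_sub, map_add, map_pow, map_intCast, Int.cast_zero, sub_zero] at h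
  unfold xC
  linear_combination h

theorem aeval_xS (A : Finset ℤ) :
    Polynomial.aeval (xC k 0 ^ 2) (∏ i ∈ A, (Polynomial.X - Polynomial.C ((i : ℤ) : k)))
      = xS k A * xS k A := by
  rw [map_prod, xS, ← Finset.prod_mul_distrib]
  refine Finset.prod_congr rfl fun i _ => ?_
  have h := xC_sq k i
  rw [← sq, h, map_sub, Polynomial.aeval_X, Polynomial.aeval_C, map_intCast]

theorem Cphi_aeval (f : Polynomial k) : Polynomial.aeval (xC k 0 ^ 2) f ∈ Cphi k :=
  Polynomial.aeval_mem_adjoin_singleton k _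

theorem Cgrade_mul (K : Finset ℤ) (c y : WeylC k) (hc : c ∈ Cphi k) (hy : y ∈ Cgrade k K) :
    c * y ∈ Cgrade k K := by
  obtain ⟨z, hz, rfl⟩ := hy
  exact ⟨c * z, (Cphi k).mul_mem hc hz, by simp [mul_assoc]⟩

theorem exists_split [CharZero k] (A B : Finset ℤ) (h : Disjoint A B) :
    ∃ s r : WeylC k, s ∈ Cphi k ∧ r ∈ Cphi k ∧ s + r = 1 ∧ xS k A ∣ s ∧ xS k B ∣ r := by
  have hc : IsCoprime (∏ i ∈ A, (Polynomial.X - Polynomial.C ((i : ℤ) : k)))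
      (∏ i ∈ B, (Polynomial.X - Polynomial.C ((i : ℤ) : k))) := by
    refine IsCoprime.prod_left fun i hi => IsCoprime.prod_right fun j hj => ?_
    refine Polynomial.pairwise_coprime_X_sub_C (s := fun i : ℤ => (i : k)) Int.cast_injective ?_
    rintro rfl
    exact Finset.disjoint_left.mp h hi hj
  obtain ⟨u, v, huv⟩ := hc
  refine ⟨_, _, Cphi_aeval k (u * ∏ i ∈ A, (Polynomial.X - Polynomial.C ((i : ℤ) : k))), 
    Cphi_aeval k (v * ∏ i ∈ B, (Polynomial.X - Polynomial.C ((i : ℤ) : k))), ?_, ?_, ?_⟩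
  rotate_left
  · rw [map_mul, aeval_xS k A]
    exact (Dvd.intro _ rfl : xS k A ∣ xS k A * xS k A).mul_left _
  · rw [map_mul, aeval_xS k B]
    exact (Dvd.intro _ rfl : xS k B ∣ xS k B * xS k B).mul_left _
  · rw [← map_add, huv, map_one]

theorem mem_Cx (I : Finset ℤ) (y : WeylC k) : y ∈ Cx k I ↔ xS k I ∣ y :=
  Ideal.mem_span_singleton

theorem xS_mul (A I U : Finset ℤ) (h : Disjoint A I) (hU : A ∪ I = U) :
    xS k A * xS k I = xS k U := by
  subst hU
  exact (Finset.prod_union h).symm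

theorem xS_dvd (A I : Finset ℤ) (h : A ⊆ I) : xS k A ∣ xS k I :=
  Finset.prod_dvd_prod_of_subset _ _ _ h

variable [CharZero k]

/-- There is an isomorphism of `ℤ_fin`-graded `C`-modules
`Cx_I ⊕ Cx_J ≅ Cx_{I∪J} ⊕ Cx_{I∩J}`: a `C`-linear equivalence that, together
with its inverse, preserves homogeneous components (a pair is homogeneous of
degree `K` when both coordinates lie in `C_K`). -/
theorem cx_sum_iso (I J : Finset ℤ) :
    ∃ e : (↥(Cx k I) × ↥(Cx k J)) ≃ₗ[WeylC k] (↥(Cx k (I ∪ J)) × ↥(Cx k (I ∩ J))),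
      (∀ (K : Finset ℤ) (p : ↥(Cx k I) × ↥(Cx k J)),
        (p.1 : WeylC k) ∈ Cgrade k K → (p.2 : WeylC k) ∈ Cgrade k K →
        ((e p).1 : WeylC k) ∈ Cgrade k K ∧ ((e p).2 : WeylC k) ∈ Cgrade k K) ∧
      (∀ (K : Finset ℤ) (q : ↥(Cx k (I ∪ J)) × ↥(Cx k (I ∩ J))),
        (q.1 : WeylC k) ∈ Cgrade k K → (q.2 : WeylC k) ∈ Cgrade k K →
        ((e.symm q).1 : WeylC k) ∈ Cgrade k K ∧ ((e.symm q).2 : WeylC k) ∈ Cgrade k K) := by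
  obtain ⟨s, r, hs, hr, hsr, hsA, hrB⟩ := exists_split k (I \ J) (J \ I)
    (Finset.disjoint_left.mpr fun x hx hy => (Finset.mem_sdiff.mp hx).2 (Finset.mem_sdiff.mp hy).1)
  have d1 : ∀ y, xS k I ∣ y → xS k (I ∪ J) ∣ r * y := fun y hy => by
    rw [← xS_mul k (J \ I) I (I ∪ J) Finset.sdiff_disjoint (by ext; simp; tauto)]
    exact mul_dvd_mul hrB hy
  have d2 : ∀ y, xS k J ∣ y → xS k (I ∪ J) ∣ s * y := fun y hy => by
    rw [← xS_mul k (I \ J) J (I ∪ J) Finset.sdiff_disjoint (by ext; simp)]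
    exact mul_dvd_mul hsA hy
  have d3 : ∀ y, xS k (I ∩ J) ∣ y → xS k I ∣ s * y := fun y hy => by
    rw [← xS_mul k (I \ J) (I ∩ J) I (Finset.disjoint_left.mpr (by simp; tauto))
      (by ext; simp; tauto)]
    exact mul_dvd_mul hsA hy
  have d4 : ∀ y, xS k (I ∩ J) ∣ y → xS k J ∣ r * y := fun y hy => by
    rw [← xS_mul k (J \ I) (I ∩ J) J (Finset.disjoint_left.mpr (by simp; tauto))
      (by ext; simp; tauto)]
    exact mul_dvd_mul hrB hy
  have i1 := xS_dvd k I (I ∪ J) Finset.subset_union_left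
  have i2 := xS_dvd k J (I ∪ J) Finset.subset_union_right
  have i3 := xS_dvd k (I ∩ J) I Finset.inter_subset_left
  have i4 := xS_dvd k (I ∩ J) J Finset.inter_subset_right
  have hp1 : ∀ p : ↥(Cx k I) × ↥(Cx k J), r * (p.1 : WeylC k) - s * p.2 ∈ Cx k (I ∪ J) :=
    fun p => (mem_Cx k _ _).mpr (dvd_sub (d1 _ ((mem_Cx k _ _).mp p.1.2))
      (d2 _ ((mem_Cx k _ _).mp p.2.2)))
  have hp2 : ∀ p : ↥(Cx k I) × ↥(Cx k J), (p.1 : WeylC k) + p.2 ∈ Cx k (I ∩ J) :=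
    fun p => (mem_Cx k _ _).mpr (dvd_add (i3.trans ((mem_Cx k _ _).mp p.1.2))
      (i4.trans ((mem_Cx k _ _).mp p.2.2)))
  have hq1 : ∀ q : ↥(Cx k (I ∪ J)) × ↥(Cx k (I ∩ J)), (q.1 : WeylC k) + s * q.2 ∈ Cx k I :=
    fun q => (mem_Cx k _ _).mpr (dvd_add (i1.trans ((mem_Cx k _ _).mp q.1.2))
      (d3 _ ((mem_Cx k _ _).mp q.2.2)))
  have hq2 : ∀ q : ↥(Cx k (I ∪ J)) × ↥(Cx k (I ∩ J)), r * (q.2 : WeylC k) - q.1 ∈ Cx k J :=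
    fun q => (mem_Cx k _ _).mpr (dvd_sub (d4 _ ((mem_Cx k _ _).mp q.2.2))
      (i2.trans ((mem_Cx k _ _).mp q.1.2)))
  let e : (↥(Cx k I) × ↥(Cx k J)) ≃ₗ[WeylC k] (↥(Cx k (I ∪ J)) × ↥(Cx k (I ∩ J))) :=
    { toFun := fun p => (⟨_, hp1 p⟩, ⟨_, hp2 p⟩)
      invFun := fun q => (⟨_, hq1 q⟩, ⟨_, hq2 q⟩)
      map_add' := fun p p' => by
        refine Prod.ext (Subtype.ext ?_) (Subtype.ext ?_)
        · change r * ((p.1 : WeylC k) + p'.1) - s * ((p.2 : WeylC k) + p'.2) =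
            (r * (p.1 : WeylC k) - s * p.2) + (r * (p'.1 : WeylC k) - s * p'.2)
          ring
        · change ((p.1 : WeylC k) + p'.1) + ((p.2 : WeylC k) + p'.2) =
            ((p.1 : WeylC k) + p.2) + ((p'.1 : WeylC k) + p'.2)
          ring
      map_smul' := fun c p => by
        refine Prod.ext (Subtype.ext ?_) (Subtype.ext ?_)
        · change r * (c * (p.1 : WeylC k)) - s * (c * (p.2 : WeylC k)) =
            c * (r * (p.1 : WeylC k) - s * p.2)
          ring
        · change c * (p.1 : WeylC k) + c * (p.2 : WeylC k) = c * ((p.1 : WeylC k) + p.2)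
          ring
      left_inv := fun p => by
        refine Prod.ext (Subtype.ext ?_) (Subtype.ext ?_)
        · change (r * (p.1 : WeylC k) - s * p.2) + s * ((p.1 : WeylC k) + p.2) = p.1
          linear_combination (p.1 : WeylC k) * hsr
        · change r * ((p.1 : WeylC k) + p.2) - (r * (p.1 : WeylC k) - s * p.2) = p.2
          linear_combination (p.2 : WeylC k) * hsr
      right_inv := fun q => by
        refine Prod.ext (Subtype.ext ?_) (Subtype.ext ?_)
        · change r * ((q.1 : WeylC k) + s * q.2) - s * (r * (q.2 : WeylC k) - q.1) = q.1
          linear_combination (q.1 : WeylC k) * hsr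
        · change ((q.1 : WeylC k) + s * q.2) + (r * (q.2 : WeylC k) - q.1) = q.2
          linear_combination (q.2 : WeylC k) * hsr }
  refine ⟨e, fun K p h1 h2 => ⟨?_, ?_⟩, fun K q h1 h2 => ⟨?_, ?_⟩⟩
  · exact (Cgrade k K).sub_mem (Cgrade_mul k K _ _ hr h1) (Cgrade_mul k K _ _ hs h2)
  · exact (Cgrade k K).add_mem h1 h2
  · exact (Cgrade k K).add_mem h1 (Cgrade_mul k K _ _ hs h2)
  · exact (Cgrade k K).sub_mem (Cgrade_mul k K _ _ hr h2) h1
end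
end

section
/- For a collection 𝒮 of finite subsets of ℤ, the set of graded ideals {Cx_I : I ∈ 𝒮} generates the category of ℤ_fin-graded C-modules if and only if ⋂_{I∈𝒮} I = ∅ and ⋃_{I∈𝒮} I = ℤ. -/
open scoped symmDiff

noncomputable section

variable (k : Type) [Field k]

theorem aux_unit {k A : Type} [Field k] [CharZero k] [CommRing A] [Algebra k A] (h : ℤ → A)
    (hh : ∀ m n : ℤ, h m - h n = algebraMap k A ((n : k) - (m : k)))
    (𝒮 : Set (Finset ℤ)) (K : Finset ℤ) (hne : 𝒮.Nonempty)
    (h1 : ∀ m : ℤ, ∃ I ∈ 𝒮, m ∉ I ∆ K) :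
    ∃ (n : ℕ) (c : Fin n → Finset ℤ) (a : Fin n → A), (∀ i, c i ∈ 𝒮) ∧
      ∑ i, a i * ∏ m ∈ (c i) ∆ K, h m = 1 := by
  classical
  have htop : Ideal.span (Set.range fun I : 𝒮 => ∏ m ∈ (I : Finset ℤ) ∆ K, h m) = ⊤ := by
    by_contra hcon
    obtain ⟨M, hM, hle⟩ := Ideal.exists_le_maximal _ hcon
    have hmem : ∀ I ∈ 𝒮, ∃ m ∈ I ∆ K, h m ∈ M := by
      intro I hI
      have : ∏ m ∈ I ∆ K, h m ∈ M := hle (Ideal.subset_span ⟨⟨I, hI⟩, rfl⟩)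
      exact (hM.isPrime.prod_mem_iff).1 this
    obtain ⟨I0, hI0⟩ := hne
    obtain ⟨m, -, hm⟩ := hmem I0 hI0
    obtain ⟨I, hI, hmI⟩ := h1 m
    obtain ⟨m', hm', hmM⟩ := hmem I hI
    have hne' : m' ≠ m := fun e => hmI (e ▸ hm')
    have hu : IsUnit (algebraMap k A ((m' : k) - (m : k))) := by
      apply IsUnit.map
      rw [isUnit_iff_ne_zero, sub_ne_zero]
      exact_mod_cast hne'
    exact hM.ne_top (Ideal.eq_top_of_isUnit_mem _ ((hh m m') ▸ M.sub_mem hm hmM) hu)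
  have h1' := (Ideal.eq_top_iff_one _).1 htop
  rw [Finsupp.mem_ideal_span_range_iff_exists_finsupp] at h1'
  obtain ⟨a, ha⟩ := h1'
  refine ⟨a.support.card, fun i => (a.support.equivFin.symm i : 𝒮),
    fun i => a (a.support.equivFin.symm i), fun i => Subtype.coe_prop _, ?_⟩
  rw [← ha, Finsupp.sum, ← Finset.sum_coe_sort a.support]
  exact Equiv.sum_comp a.support.equivFin.symm
    (fun I : a.support => a I * ∏ m ∈ ((I : 𝒮) : Finset ℤ) ∆ K, h m)

theorem aux_prod1 {A : Type} [CommRing A] (x : ℤ → A) (I K : Finset ℤ) :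
    (∏ m ∈ K \ I, x m ^ 2) * ∏ m ∈ I, x m
      = ((∏ m ∈ K \ I, x m) * ∏ m ∈ I \ K, x m) * ∏ m ∈ K, x m := by
  rw [← Finset.prod_inter_mul_prod_sdiff I K x, ← Finset.prod_inter_mul_prod_sdiff K I x,
    Finset.inter_comm K I, Finset.prod_pow]
  ring

theorem aux_prod2 {A : Type} [CommRing A] (x : ℤ → A) (I K : Finset ℤ) :
    (∏ m ∈ K \ I, x m ^ 2) * ((∏ m ∈ I ∆ K, x m) * ∏ m ∈ I, x m)
      = (∏ m ∈ I ∆ K, x m ^ 2) * ∏ m ∈ K, x m := by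
  have hd : Disjoint (I \ K) (K \ I) := disjoint_sdiff_sdiff
  have hs : I ∆ K = (I \ K) ∪ (K \ I) := rfl
  rw [mul_left_comm, aux_prod1, Finset.prod_pow, hs, Finset.prod_union hd]
  ring

theorem xC_rel (m n : ℤ) : xC k n ^ 2 + (n : WeylC k) = xC k m ^ 2 + (m : WeylC k) := by
  have : (Ideal.Quotient.mk (Ideal.span { p : MvPolynomial ℤ k |
    ∃ m n : ℤ, p = MvPolynomial.X n ^ 2 + (n : MvPolynomial ℤ k)
      - MvPolynomial.X m ^ 2 - (m : MvPolynomial ℤ k) })) (MvPolynomial.X n ^ 2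
        + (n : MvPolynomial ℤ k) - MvPolynomial.X m ^ 2 - (m : MvPolynomial ℤ k)) = 0 :=
    Ideal.Quotient.eq_zero_iff_mem.2 (Ideal.subset_span ⟨m, n, rfl⟩)
  simp only [map_sub, map_add, map_pow, map_intCast] at this
  unfold xC
  linear_combination this

theorem sq_mem (n : ℤ) : xC k n ^ 2 ∈ Cphi k := by
  have h : xC k n ^ 2 = xC k 0 ^ 2 - (n : WeylC k) := by
    have := xC_rel k 0 n
    push_cast at this
    linear_combination this
  rw [h]
  exact sub_mem (Algebra.subset_adjoin rfl) (intCast_mem _ n)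

theorem grade_mul {a y : WeylC k} {L : Finset ℤ} (ha : a ∈ Cphi k) (hy : y ∈ Cgrade k L) :
    a * y ∈ Cgrade k L := by
  obtain ⟨b, hb, rfl⟩ := hy
  refine ⟨a * b, (Cphi k).mul_mem ha hb, ?_⟩
  simp [mul_assoc]

theorem exists_hom (n : ℤ) [CharZero k] : ∃ (φ : WeylC k →ₐ[k] DualNumber (AlgebraicClosure k)),
    φ (xC k n) = DualNumber.eps ∧ (∀ m, m ≠ n → (φ (xC k m)).fst ≠ 0) ∧
    ∀ a ∈ Cphi k, ∃ t : k, φ a = algebraMap k _ t := by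
  classical
  have hs : ∀ m : ℤ, ∃ s : AlgebraicClosure k, s ^ 2 = (n : AlgebraicClosure k) - m := fun m =>
    IsAlgClosed.exists_pow_nat_eq _ two_pos
  choose s hs using hs
  let v : ℤ → DualNumber (AlgebraicClosure k) := fun m =>
    if m = n then DualNumber.eps else TrivSqZeroExt.inl (s m)
  have hv : ∀ m, v m ^ 2 + (m : DualNumber (AlgebraicClosure k)) = n := by
    intro m
    by_cases h : m = n
    · simp [v, h, pow_two]
    · simp only [v, h, if_false]
      have h2 := congrArg (TrivSqZeroExt.inlHom (AlgebraicClosure k) (AlgebraicClosure k)) (hs m)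
      rw [map_pow, map_sub, map_intCast, map_intCast] at h2
      change (TrivSqZeroExt.inlHom (AlgebraicClosure k) (AlgebraicClosure k)) (s m) ^ 2 + _ = _
      rw [h2]
      exact sub_add_cancel _ _
  let φ : WeylC k →ₐ[k] DualNumber (AlgebraicClosure k) :=
    Ideal.Quotient.liftₐ _ (MvPolynomial.aeval v) (by
      intro a ha
      have : Ideal.span { p : MvPolynomial ℤ k |
        ∃ m n : ℤ, p = MvPolynomial.X n ^ 2 + (n : MvPolynomial ℤ k)
        - MvPolynomial.X m ^ 2 - (m : MvPolynomial ℤ k) } ≤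
          RingHom.ker (MvPolynomial.aeval (R := k) v) := by
        rw [Ideal.span_le]
        rintro _ ⟨m, n', rfl⟩
        simp only [SetLike.mem_coe, RingHom.mem_ker, map_sub, map_add, map_pow, map_intCast,
          MvPolynomial.aeval_X]
        linear_combination hv n' - hv m
      exact this ha)
  have hφ : ∀ m, φ (xC k m) = v m := by
    intro m
    change MvPolynomial.aeval v (MvPolynomial.X m : MvPolynomial ℤ k) = v m
    simp
  refine ⟨φ, by simp [hφ, v], ?_, ?_⟩
  · intro m hm h0
    rw [hφ] at h0
    simp only [v, hm, if_false, TrivSqZeroExt.fst_inl] at h0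
    have := hs m
    rw [h0] at this
    have h2 : ((n : AlgebraicClosure k)) = m := by linear_combination -this
    exact hm (by exact_mod_cast h2.symm)
  · intro a ha
    have : Cphi k ≤ (⊥ : Subalgebra k (DualNumber (AlgebraicClosure k))).comap φ := by
      refine Algebra.adjoin_le ?_
      rintro _ rfl
      change φ (xC k 0 ^ 2) ∈ (⊥ : Subalgebra k (DualNumber (AlgebraicClosure k)))
      have h0 := hv 0
      rw [map_pow, hφ]
      have : v 0 ^ 2 = (n : DualNumber (AlgebraicClosure k)) := by
        simpa using h0
      rw [this]
      exact intCast_mem _ n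
    obtain ⟨t, ht⟩ := Algebra.mem_bot.1 (this ha)
    exact ⟨t, ht.symm⟩

theorem fwd_decomp (K : Finset ℤ) (n : ℕ) (c : Fin n → Finset ℤ)
    (f : (∀ i : Fin n, ↥(Cx k (c i))) →ₗ[WeylC k] ↥(Cx k K))
    (hs : Function.Surjective f)
    (hg : ∀ (L : Finset ℤ) (p : ∀ i : Fin n, ↥(Cx k (c i))),
          (∀ i, ((p i : WeylC k) ∈ Cgrade k L)) → (f p : WeylC k) ∈ Cgrade k L) :
    ∃ (r y : Fin n → WeylC k), (∀ i, y i ∈ Cgrade k (c i)) ∧ (∀ i, y i ∈ Cx k K) ∧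
      xS k K = ∑ i, r i * y i := by
  classical
  obtain ⟨p, hp⟩ := hs ⟨xS k K, Ideal.subset_span rfl⟩
  have hr : ∀ i, ∃ r : WeylC k, r * xS k (c i) = p i := fun i =>
    Ideal.mem_span_singleton'.1 (p i).2
  choose r hr using hr
  let e : ∀ i, ↥(Cx k (c i)) := fun i => ⟨xS k (c i), Ideal.subset_span rfl⟩
  have hpe : p = ∑ i, r i • (Pi.single i (e i) : ∀ i : Fin n, ↥(Cx k (c i))) := by
    have : ∀ i, r i • (Pi.single i (e i) : ∀ i : Fin n, ↥(Cx k (c i))) = Pi.single i (p i) := by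
      intro i
      have hpi : p i = r i • e i := Subtype.ext (hr i).symm
      rw [hpi]
      exact (Pi.single_smul (f := fun i => ↥(Cx k (c i))) i (r i) (e i)).symm
    simp_rw [this]
    exact (Finset.univ_sum_single p).symm
  refine ⟨r, fun i => f (Pi.single i (e i)), ?_, fun i => Subtype.coe_prop _, ?_⟩
  · intro i
    apply hg
    intro j
    by_cases h : j = i
    · subst h
      rw [Pi.single_eq_same]
      exact ⟨1, one_mem (Cphi k), by simp [e]⟩
    · rw [Pi.single_eq_of_ne h]
      exact Submodule.zero_mem _
  · have h2 := congrArg (Subtype.val) hp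
    rw [hpe, map_sum] at h2
    simp only [map_smul, Submodule.coe_sum, Submodule.coe_smul, smul_eq_mul] at h2
    exact h2.symm

variable [CharZero k]

set_option synthInstance.maxHeartbeats 1000000 in
set_option maxHeartbeats 1000000 in
/-- For a collection `𝒮` of finite subsets of `ℤ`, the graded
ideals `{Cx_I : I ∈ 𝒮}` generate the category of `ℤ_fin`-graded `C`-modules —
equivalently, every `Cx_K` is a quotient (by a surjective degree-preserving
`C`-module map) of a finite direct sum of modules `Cx_I` with `I ∈ 𝒮` —
if and only if `⋂_{I∈𝒮} I = ∅` and `⋃_{I∈𝒮} I = ℤ`. -/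
theorem cx_generates_iff (𝒮 : Set (Finset ℤ)) :
    (∀ K : Finset ℤ, ∃ (n : ℕ) (c : Fin n → Finset ℤ), (∀ i, c i ∈ 𝒮) ∧
      ∃ f : (∀ i : Fin n, ↥(Cx k (c i))) →ₗ[WeylC k] ↥(Cx k K),
        Function.Surjective f ∧
        ∀ (L : Finset ℤ) (p : ∀ i : Fin n, ↥(Cx k (c i))),
          (∀ i, ((p i : WeylC k) ∈ Cgrade k L)) → (f p : WeylC k) ∈ Cgrade k L) ↔
    ((⋂ I ∈ 𝒮, (I : Set ℤ)) = ∅ ∧ (⋃ I ∈ 𝒮, (I : Set ℤ)) = Set.univ) := by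
  classical
  constructor
  · intro H
    constructor
    · rw [Set.eq_empty_iff_forall_notMem]
      intro n hn
      simp only [Set.mem_iInter, Finset.mem_coe] at hn
      obtain ⟨N, c, hc, f, hs, hg⟩ := H ∅
      obtain ⟨r, y, hy, -, hsum⟩ := fwd_decomp k ∅ N c f hs hg
      obtain ⟨φ, hφn, -, -⟩ := exists_hom k n
      have hy0 : ∀ i, (φ (y i)).fst = 0 := by
        intro i
        obtain ⟨b, -, hb⟩ := hy i
        rw [← hb, LinearMap.mulRight_apply, map_mul, xS, map_prod,
          ← Finset.mul_prod_erase _ _ (hn _ (hc i)), hφn]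
        simp
      have h1 := congrArg (fun z => (φ z).fst) hsum
      simp only [xS, Finset.prod_empty, map_one, map_sum, map_mul, TrivSqZeroExt.fst_one,
        TrivSqZeroExt.fst_sum, TrivSqZeroExt.fst_mul, hy0, mul_zero,
        Finset.sum_const_zero] at h1
      exact one_ne_zero h1
    · rw [Set.eq_univ_iff_forall]
      intro n
      by_contra hn
      simp only [Set.mem_iUnion, Finset.mem_coe, not_exists] at hn
      obtain ⟨N, c, hc, f, hs, hg⟩ := H {n}
      obtain ⟨r, y, hy, hyK, hsum⟩ := fwd_decomp k {n} N c f hs hg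
      obtain ⟨φ, hφn, hφm, hφa⟩ := exists_hom k n
      have hy0 : ∀ i, φ (y i) = 0 := by
        intro i
        obtain ⟨b, hb, hby⟩ := hy i
        obtain ⟨t, ht⟩ := hφa b hb
        obtain ⟨q, hq⟩ := Ideal.mem_span_singleton'.1 (hyK i)
        have hf0 : (φ (y i)).fst = 0 := by
          rw [← hq, map_mul, xS, Finset.prod_singleton, hφn]
          simp
        rw [← hby, LinearMap.mulRight_apply, map_mul, ht, xS, map_prod] at hf0 ⊢
        rw [TrivSqZeroExt.fst_mul] at hf0
        rcases mul_eq_zero.1 hf0 with h | h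
        · have : t = 0 := by
            rw [TrivSqZeroExt.algebraMap_eq_inl', TrivSqZeroExt.fst_inl] at h
            simpa using h
          rw [this, map_zero, zero_mul]
        · exfalso
          have h' : ∏ m ∈ c i, (φ (xC k m)).fst = 0 := by
            rw [← h]
            exact (map_prod (TrivSqZeroExt.fstHom (AlgebraicClosure k) (AlgebraicClosure k)
              (AlgebraicClosure k)) (fun m => φ (xC k m)) (c i)).symm
          obtain ⟨m, hm, hm0⟩ := Finset.prod_eq_zero_iff.1 h'
          refine hφm m ?_ hm0
          rintro rfl
          exact hn _ (hc i) hm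
      have h1 := congrArg (fun z => (φ z).snd) hsum
      simp only [xS, Finset.prod_singleton, map_sum, map_mul, hφn, hy0, mul_zero,
        Finset.sum_const_zero, DualNumber.snd_eps, TrivSqZeroExt.snd_zero] at h1
      exact one_ne_zero h1
  · rintro ⟨hI, hU⟩ K
    have hU' : ∀ m : ℤ, ∃ I ∈ 𝒮, m ∈ I := by
      intro m
      have : m ∈ (⋃ I ∈ 𝒮, (I : Set ℤ)) := hU ▸ Set.mem_univ m
      simpa using this
    have hI' : ∀ m : ℤ, ∃ I ∈ 𝒮, m ∉ I := by
      intro m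
      have : m ∉ (⋂ I ∈ 𝒮, (I : Set ℤ)) := hI ▸ Set.notMem_empty m
      simpa using this
    have h1 : ∀ m : ℤ, ∃ I ∈ 𝒮, m ∉ I ∆ K := by
      intro m
      by_cases hm : m ∈ K
      · obtain ⟨I, h, h'⟩ := hU' m
        exact ⟨I, h, by simp [Finset.mem_symmDiff, hm, h']⟩
      · obtain ⟨I, h, h'⟩ := hI' m
        exact ⟨I, h, by simp [Finset.mem_symmDiff, hm, h']⟩
    obtain ⟨n, c, a, hc, hsum⟩ := aux_unit (k := k) (A := Cphi k)
      (fun m => ⟨xC k m ^ 2, sq_mem k m⟩) (by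
        intro m n
        apply Subtype.ext
        have := xC_rel k m n
        simp only [map_sub, map_intCast]
        push_cast
        linear_combination -this) 𝒮 K ((hU' 0).imp fun _ h => h.1) h1
    have hsum' : ∑ i, (a i : WeylC k) * ∏ m ∈ (c i) ∆ K, xC k m ^ 2 = 1 := by
      have := congrArg (Subtype.val) hsum
      simpa using this
    have hmem : ∀ i, ∀ p : ↥(Cx k (c i)),
        ((a i : WeylC k) * ∏ m ∈ K \ c i, xC k m ^ 2) * (p : WeylC k) ∈ Cx k K := by
      intro i p
      obtain ⟨q, hq⟩ := Ideal.mem_span_singleton'.1 p.2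
      have h2 := aux_prod1 (xC k) (c i) K
      refine Ideal.mem_span_singleton'.2 ⟨(a i : WeylC k) * q *
        ((∏ m ∈ K \ c i, xC k m) * ∏ m ∈ c i \ K, xC k m), ?_⟩
      rw [← hq]
      unfold xS
      linear_combination -((a i : WeylC k) * q) * h2
    let g : ∀ i, ↥(Cx k (c i)) →ₗ[WeylC k] ↥(Cx k K) := fun i =>
      { toFun := fun p => ⟨_, hmem i p⟩
        map_add' := fun p q => Subtype.ext (by
          simp only [Submodule.coe_add]; ring)
        map_smul' := fun r p => Subtype.ext (by
          simp only [Submodule.coe_smul, smul_eq_mul, RingHom.id_apply]; ring) }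
    let f : (∀ i : Fin n, ↥(Cx k (c i))) →ₗ[WeylC k] ↥(Cx k K) :=
      ∑ i, (g i).comp (LinearMap.proj i)
    have hf : ∀ p, (f p : WeylC k) =
        ∑ i, ((a i : WeylC k) * ∏ m ∈ K \ c i, xC k m ^ 2) * (p i : WeylC k) := by
      intro p
      simp only [f, LinearMap.sum_apply, Submodule.coe_sum, LinearMap.comp_apply,
        LinearMap.proj_apply]
      rfl
    refine ⟨n, c, hc, f, ?_, ?_⟩
    · intro y
      obtain ⟨q, hq⟩ := Ideal.mem_span_singleton'.1 y.2
      refine ⟨fun i => ⟨(q * ∏ m ∈ (c i) ∆ K, xC k m) * xS k (c i),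
        Ideal.mul_mem_left _ _ (Ideal.subset_span rfl)⟩, Subtype.ext ?_⟩
      rw [hf, ← hq, ← one_mul (q * xS k K), ← hsum', Finset.sum_mul]
      refine Finset.sum_congr rfl fun i _ => ?_
      have h2 := aux_prod2 (xC k) (c i) K
      unfold xS
      linear_combination ((a i : WeylC k) * q) * h2
    · intro L p hp
      rw [hf]
      refine Submodule.sum_mem _ fun i _ => grade_mul k ?_ (hp i)
      exact mul_mem (a i).2 (prod_mem fun m _ => sq_mem k m)
end
end
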